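/- The family 𝒯𝒮ℱ of topologically space-filling curves is maximal dense-lineable in C(I,ℝ²): there exists a dense linear subspace M of the Banach space C(I,ℝ²) with dimension 𝔠, the cardinality of the continuum (which equals the dimension of C(I,ℝ²)), such that every nonzero element of M belongs to 𝒯𝒮ℱ. -/

import Mathlib

/-- A continuous map `φ : I → ℝ²` is a topologically space-filling curve if the
interior of its image is nonempty. -/
def TopSpaceFilling : Set C(unitInterval, ℝ × ℝ) :=
  {φ | (interior (Set.range ⇑φ)).Nonempty}

open Set Filter Topology

/-- Abbreviation: the closed unit disc of `ℝ × ℝ` (sup norm). -/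
abbrev TSFDisc : Type := Metric.closedBall (0 : ℝ × ℝ) 1

/-- A curve filling the Hilbert cube. -/
theorem tsf_exists_peano :
    ∃ Q : C(unitInterval, ℕ → TSFDisc), Function.Surjective Q := by
  let _ : MetricSpace (ℕ → TSFDisc) := TopologicalSpace.metrizableSpaceMetric _
  have : Nonempty TSFDisc := ⟨⟨0, by simp⟩⟩
  obtain ⟨q, hq, hqs⟩ := exists_nat_bool_continuous_surjective_of_compact (ℕ → TSFDisc)
  let e : (ℕ → Bool) → unitInterval := fun b =>
    ⟨(cantorSetHomeomorphNatToBool.symm b : ℝ),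
      cantorSet_subset_unitInterval (cantorSetHomeomorphNatToBool.symm b).2⟩
  have hec : Continuous e := by
    apply Continuous.subtype_mk
    exact continuous_subtype_val.comp cantorSetHomeomorphNatToBool.symm.continuous
  have hei : Function.Injective e := by
    intro b c h
    have h1 := congrArg Subtype.val h
    exact cantorSetHomeomorphNatToBool.symm.injective (Subtype.ext h1)
  have he : IsClosedEmbedding e := hec.isClosedEmbedding hei
  obtain ⟨Q, hQ⟩ := ContinuousMap.exists_extension' he ⟨q, hq⟩
  refine ⟨Q, fun x => ?_⟩
  obtain ⟨b, rfl⟩ := hqs x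
  exact ⟨e b, congrFun hQ b⟩

theorem tsf_exists_point (Q : C(unitInterval, ℕ → TSFDisc)) (hQ : Function.Surjective Q) :
    ∃ t₀ : unitInterval, ∀ N ∈ 𝓝 t₀, IsClosed N → (interior (Q '' N)).Nonempty := by
  have : Nonempty TSFDisc := ⟨⟨0, by simp⟩⟩
  by_contra! hcon
  choose N hN hNc hNe using hcon
  obtain ⟨s, hs⟩ := CompactSpace.elim_nhds_subcover N hN
  obtain ⟨i, hi⟩ := nonempty_interior_of_iUnion_of_closed (ι := s)
    (f := fun i => Q '' N i)
    (fun i => ((hNc i).isCompact.image Q.continuous).isClosed) (by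
      rw [← image_iUnion]
      have : (⋃ i : s, N i) = univ := by
        rw [← top_eq_univ, ← hs]
        exact iUnion_subtype (fun x => x ∈ s) (fun i => N i.1)
      rw [this, image_univ, hQ.range_eq])
  rw [hNe] at hi
  simp at hi

theorem tsf_flat (t₀ : unitInterval) (p : C(unitInterval, ℝ × ℝ)) {ε : ℝ} (hε : 0 < ε) :
    ∃ p' : C(unitInterval, ℝ × ℝ), ‖p' - p‖ ≤ ε ∧ ∀ᶠ t in 𝓝 t₀, p' t = p t₀ := by
  obtain ⟨δ, hδ, h⟩ := Metric.continuousAt_iff.1 (p.continuous.continuousAt (x := t₀)) ε hε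
  let χ : unitInterval → ℝ := fun t => max 0 (min 1 (2 - 2 * dist t t₀ / δ))
  have hχ : Continuous χ := by fun_prop
  have hχ0 : ∀ t, 0 ≤ χ t := fun t => le_max_left _ _
  have hχ1 : ∀ t, χ t ≤ 1 := fun t => max_le zero_le_one (min_le_left _ _)
  refine ⟨⟨fun t => p t + χ t • (p t₀ - p t), by fun_prop⟩, ?_, ?_⟩
  · rw [ContinuousMap.norm_le _ hε.le]
    intro t
    simp only [ContinuousMap.sub_apply, ContinuousMap.coe_mk, add_sub_cancel_left, norm_smul,
      Real.norm_eq_abs, abs_of_nonneg (hχ0 t)]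
    by_cases ht : dist t t₀ < δ
    · have h1 := h ht
      rw [dist_comm, dist_eq_norm] at h1
      calc χ t * ‖p t₀ - p t‖ ≤ 1 * ‖p t₀ - p t‖ := by gcongr; exact hχ1 t
        _ ≤ ε := by linarith
    · have : χ t = 0 := by
        apply max_eq_left
        apply (min_le_right _ _).trans
        have : 2 ≤ 2 * dist t t₀ / δ := by
          rw [le_div_iff₀ hδ]; linarith [not_lt.1 ht]
        linarith
      rw [this, zero_mul]; exact hε.le
  · filter_upwards [Metric.ball_mem_nhds t₀ (half_pos hδ)] with t ht
    have : χ t = 1 := by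
      have h2 : 2 * dist t t₀ / δ ≤ 1 := by
        rw [div_le_iff₀ hδ]; linarith [Metric.mem_ball.1 ht]
      simp only [χ]
      rw [min_eq_left (by linarith), max_eq_right zero_le_one]
    simp [this]

theorem tsf_mk_curves : Cardinal.mk C(unitInterval, ℝ × ℝ) ≤ Cardinal.continuum := by
  have hinj : Function.Injective
      (fun (f : C(unitInterval, ℝ × ℝ)) (n : ℕ) => f (TopologicalSpace.denseSeq unitInterval n)) := by
    intro f g h
    apply DFunLike.coe_injective
    apply Continuous.ext_on (TopologicalSpace.denseRange_denseSeq unitInterval)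
      f.continuous g.continuous
    rintro _ ⟨n, rfl⟩
    exact congrFun h n
  refine (Cardinal.mk_le_of_injective hinj).trans ?_
  simp [Cardinal.mk_real]

theorem tsf_summable {a : ℝ} (ha : a ∈ Ioo (0 : ℝ) (1 / 2)) (k : ℕ)
    (x : ℕ → TSFDisc) : ‖a ^ k • (x k : ℝ × ℝ)‖ ≤ (1 / 2) ^ k := by
  have h1 : ‖(x k : ℝ × ℝ)‖ ≤ 1 := mem_closedBall_zero_iff.1 (x k).2
  rw [norm_smul, Real.norm_eq_abs, abs_of_nonneg (pow_nonneg ha.1.le k)]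
  calc a ^ k * ‖(x k : ℝ × ℝ)‖ ≤ (1 / 2) ^ k * 1 := by
        gcongr
        · exact ha.1.le
        · exact ha.2.le
    _ = _ := mul_one _

/-- If `h k ≠ 0`, moving only the `k`-th coordinate fills an open set. -/
theorem tsf_open_image (U : Set (ℕ → TSFDisc)) (hU : IsOpen U) (hne : U.Nonempty)
    (L : (ℕ → TSFDisc) → ℝ × ℝ) (k : ℕ) (r : ℝ) (hr : r ≠ 0)
    (hL : ∀ x y, L (Function.update x k y) = L x + r • ((y : ℝ × ℝ) - x k)) :
    (interior (L '' U)).Nonempty := by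
  obtain ⟨x, hx⟩ := hne
  have hopen : IsOpen {y : TSFDisc | Function.update x k y ∈ U} :=
    hU.preimage (by fun_prop)
  obtain ⟨V, hV, hVe⟩ := isOpen_induced_iff.1 hopen
  have hxV : (x k : ℝ × ℝ) ∈ V := by
    have : x k ∈ Subtype.val ⁻¹' V := by rw [hVe]; simpa using hx
    exact this
  have hcl : (x k : ℝ × ℝ) ∈ closure (Metric.ball (0 : ℝ × ℝ) 1) := by
    rw [closure_ball _ one_ne_zero]; exact (x k).2
  obtain ⟨y, hyV, hyB⟩ := mem_closure_iff.1 hcl V hV hxV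
  let φ : ℝ × ℝ ≃ₜ ℝ × ℝ :=
    (Homeomorph.smulOfNeZero r hr).trans (Homeomorph.addLeft (L x - r • (x k : ℝ × ℝ)))
  have hφ : ∀ y, φ y = L x - r • (x k : ℝ × ℝ) + r • y := fun y => rfl
  have hO : IsOpen (φ '' (V ∩ Metric.ball 0 1)) :=
    φ.isOpenMap _ (hV.inter Metric.isOpen_ball)
  refine ⟨φ y, interior_maximal ?_ hO ⟨y, ⟨hyV, hyB⟩, rfl⟩⟩
  rintro _ ⟨z, ⟨hzV, hzB⟩, rfl⟩
  let z' : TSFDisc := ⟨z, Metric.ball_subset_closedBall hzB⟩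
  have hz : z' ∈ {y : TSFDisc | Function.update x k y ∈ U} := by
    rw [← hVe]; exact hzV
  refine ⟨_, hz, ?_⟩
  rw [hL, hφ, smul_sub]
  simp only [z']
  abel

theorem tsf_vandermonde {ι : Type*} (a : ι → ℝ) (ha : Function.Injective a) (c : ι →₀ ℝ)
    (hc : c ≠ 0) : ∃ k : ℕ, c.sum (fun i r => r * a i ^ k) ≠ 0 := by
  by_contra! hcon
  apply hc
  let F : ι → (Multiplicative ℕ →* ℝ) := fun i => powersHom ℝ (a i)
  have hF : Function.Injective F := (powersHom ℝ).injective.comp ha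
  have hli := (linearIndependent_monoidHom (Multiplicative ℕ) ℝ).comp F hF
  rw [linearIndependent_iff] at hli
  apply hli
  funext k
  have := hcon k.toAdd
  simp only [Finsupp.linearCombination_apply, Finsupp.sum, Finset.sum_apply] at this ⊢
  simpa [F] using this

theorem topSpaceFilling_maximal_dense_lineable :
    Module.rank ℝ C(unitInterval, ℝ × ℝ) = Cardinal.continuum ∧
    ∃ M : Submodule ℝ C(unitInterval, ℝ × ℝ),
      Dense (M : Set C(unitInterval, ℝ × ℝ)) ∧
      Module.rank ℝ M = Cardinal.continuum ∧
      ∀ f ∈ M, f ≠ 0 → f ∈ TopSpaceFilling := by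
  obtain ⟨Q, hQ⟩ := tsf_exists_peano
  obtain ⟨t₀, ht₀⟩ := tsf_exists_point Q hQ
  let ι := C(unitInterval, ℝ × ℝ) × ℕ
  have hcardC : Cardinal.mk C(unitInterval, ℝ × ℝ) = Cardinal.continuum := by
    apply le_antisymm tsf_mk_curves
    have hinj : Function.Injective
        (fun r : ℝ => (ContinuousMap.const unitInterval ((r, 0) : ℝ × ℝ))) := by
      intro r s h
      have := congrArg (fun f : C(unitInterval, ℝ × ℝ) => (f 0).1) h
      simpa using this
    simpa [Cardinal.mk_real] using Cardinal.mk_le_of_injective hinj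
  have hcard : Cardinal.mk ι = Cardinal.continuum := by
    simp [ι, hcardC]
  obtain ⟨em⟩ : Nonempty (ι ≃ Ioo (0 : ℝ) (1 / 2)) := by
    apply Cardinal.eq.1
    rw [hcard, Cardinal.mk_Ioo_real (by norm_num)]
  let a : ι → ℝ := fun i => em i
  have ha : ∀ i, a i ∈ Ioo (0 : ℝ) (1 / 2) := fun i => (em i).2
  have hainj : Function.Injective a := Subtype.val_injective.comp em.injective
  have hgeo : Summable (fun k : ℕ => ((1 : ℝ) / 2) ^ k) := summable_geometric_two
  let G : ι → (ℕ → TSFDisc) → ℝ × ℝ := fun i x => ∑' k, a i ^ k • (x k : ℝ × ℝ)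
  have hGc : ∀ i, Continuous (G i) := fun i =>
    continuous_tsum (fun k => by fun_prop) hgeo (fun k x => tsf_summable (ha i) k x)
  have hGs : ∀ (i : ι) (x : ℕ → TSFDisc), Summable (fun k => a i ^ k • (x k : ℝ × ℝ)) := fun i x =>
    Summable.of_norm_bounded hgeo (fun k => tsf_summable (ha i) k x)
  have hGb : ∀ i x, ‖G i x‖ ≤ 2 := fun i x =>
    tsum_of_norm_bounded hasSum_geometric_two (fun k => tsf_summable (ha i) k x)
  have hGu : ∀ i x k y, G i (Function.update x k y) =
      G i x + a i ^ k • ((y : ℝ × ℝ) - x k) := by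
    intro i x k y
    rw [← sub_eq_iff_eq_add']
    simp only [G]
    rw [← (hGs i _).tsum_sub (hGs i x), tsum_eq_single k]
    · simp [smul_sub]
    · intro j hj
      simp [Function.update_of_ne hj]
  let g : ι → C(unitInterval, ℝ × ℝ) := fun i => ⟨fun t => G i (Q t), (hGc i).comp Q.continuous⟩
  have hε : ∀ n : ℕ, (0 : ℝ) < 1 / ((n : ℝ) + 1) := fun n => Nat.one_div_pos_of_nat
  choose P hP1 hP2 using fun i : ι => tsf_flat t₀ i.1 (hε i.2)
  let f : ι → C(unitInterval, ℝ × ℝ) := fun i => P i + (1 / ((i.2 : ℝ) + 1)) • g i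
  have key : ∀ c : ι →₀ ℝ, c ≠ 0 → Finsupp.linearCombination ℝ f c ∈ TopSpaceFilling := by
    intro c hc
    obtain ⟨k, hk⟩ : ∃ k : ℕ, ∑ i ∈ c.support, c i * (1 / ((i.2 : ℝ) + 1)) * a i ^ k ≠ 0 := by
      let d : ι →₀ ℝ := Finsupp.onFinset c.support (fun i => c i * (1 / ((i.2 : ℝ) + 1)))
        (fun i hi => by
          rw [Finsupp.mem_support_iff]; exact left_ne_zero_of_mul hi)
      have hd : d ≠ 0 := by
        obtain ⟨i, hi⟩ := Finsupp.ne_iff.1 hc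
        apply Finsupp.ne_iff.2 ⟨i, ?_⟩
        exact mul_ne_zero hi (hε i.2).ne'
      obtain ⟨k, hk⟩ := tsf_vandermonde a hainj d hd
      refine ⟨k, ?_⟩
      rwa [Finsupp.onFinset_sum _ (by simp)] at hk
    have hev : ∀ᶠ t in 𝓝 t₀, ∀ i ∈ c.support, P i t = i.1 t₀ :=
      (Filter.eventually_all_finset _).2 (fun i _ => hP2 i)
    obtain ⟨N, ⟨hN, hNc⟩, hNs⟩ := (closed_nhds_basis t₀).mem_iff.1 hev
    let L : (ℕ → TSFDisc) → ℝ × ℝ := fun x =>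
      ∑ i ∈ c.support, c i • (i.1 t₀ + (1 / ((i.2 : ℝ) + 1)) • G i x)
    have hL := tsf_open_image (interior (Q '' N)) isOpen_interior (ht₀ N hN hNc) L k _ hk (by
      intro x y
      simp only [L, hGu]
      rw [Finset.sum_smul, ← Finset.sum_add_distrib]
      apply Finset.sum_congr rfl
      intro i _
      simp only [smul_add, smul_smul, mul_assoc]
      abel)
    refine hL.mono (interior_mono ?_)
    rintro _ ⟨x, hx, rfl⟩
    obtain ⟨t, ht, rfl⟩ := interior_subset hx
    refine ⟨t, ?_⟩
    have hPt := hNs ht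
    simp only [Finsupp.linearCombination_apply, Finsupp.sum, ContinuousMap.sum_apply, L]
    apply Finset.sum_congr rfl
    intro i hi
    have := hPt i hi
    simp [f, g, this]
  have hzero : (0 : C(unitInterval, ℝ × ℝ)) ∉ TopSpaceFilling := by
    intro h
    have h1 : (interior (Set.range (⇑(0 : C(unitInterval, ℝ × ℝ))))).Nonempty := h
    have h2 : Set.range (⇑(0 : C(unitInterval, ℝ × ℝ))) = {0} := by
      ext x; simp
    rw [h2, interior_singleton] at h1
    simp at h1
  have hli : LinearIndependent ℝ f := by
    rw [linearIndependent_iff]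
    intro c hc
    by_contra hne
    exact hzero (hc ▸ key c hne)
  have hrank : Module.rank ℝ (Submodule.span ℝ (Set.range f)) = Cardinal.continuum := by
    rw [rank_span hli, Cardinal.mk_range_eq _ hli.injective, hcard]
  refine ⟨le_antisymm ((rank_le_card ℝ _).trans hcardC.le) (hrank ▸ Submodule.rank_le _),
    Submodule.span ℝ (Set.range f), ?_, hrank, ?_⟩
  · rw [Metric.dense_iff]
    intro p r hr
    obtain ⟨n, hn⟩ := exists_nat_one_div_lt (show (0 : ℝ) < r / 3 by linarith)
    refine ⟨f (p, n), ?_, Submodule.subset_span ⟨_, rfl⟩⟩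
    rw [Metric.mem_ball, dist_eq_norm]
    have h1 := hP1 (p, n)
    have h2 : ‖g (p, n)‖ ≤ 2 := (ContinuousMap.norm_le _ zero_le_two).2 (fun t => hGb _ _)
    calc ‖f (p, n) - p‖ = ‖(P (p, n) - p) + (1 / ((n : ℝ) + 1)) • g (p, n)‖ := by
          congr 1; simp only [f]; abel
      _ ≤ ‖P (p, n) - p‖ + ‖(1 / ((n : ℝ) + 1)) • g (p, n)‖ := norm_add_le _ _
      _ ≤ 1 / ((n : ℝ) + 1) + 1 / ((n : ℝ) + 1) * 2 := by
          rw [norm_smul, Real.norm_eq_abs, abs_of_pos (hε n)]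
          gcongr
      _ < r := by linarith
  · intro h hh hne
    rw [Finsupp.mem_span_range_iff_exists_finsupp] at hh
    obtain ⟨c, rfl⟩ := hh
    apply key c
    rintro rfl
    simp at hne
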